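/- Let 0 < q ≤ p ≤ 2, let X be a Banach space, let τ : D → D be injective, and let f = Σ_J x_J h_J be a finitely supported dyadic H^q_X atom: there is I ∈ D with supp 𝕊(f) ⊆ I and 𝕊(f) ≤ |I|^{−1/q} everywhere. Then ‖(T_{τ,q} ⊗ Id_X)(f)‖_{H^q_X} ≤ C₁^{1/q − 1/p} · ‖T_{τ,p} ⊗ Id_X‖_p (inequality in [0,∞]). -/

import Mathlib

open MeasureTheory Set
open scoped ENNReal NNReal Classical

noncomputable section

/-- A dyadic subinterval of `[0,1)`: the half-open interval
`[k/2^n, (k+1)/2^n)` with `k < 2^n`. -/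
structure DyadicI where
  n : ℕ
  k : ℕ
  hk : k < 2 ^ n

instance : Nonempty DyadicI := ⟨⟨0, 0, by norm_num⟩⟩

namespace DyadicI

/-- The length `|I| = 2^{-n}` of a dyadic interval. -/
def len (I : DyadicI) : ℝ := (2 : ℝ) ^ (-(I.n : ℤ))

/-- The left endpoint `k 2^{-n}` of a dyadic interval. -/
def lep (I : DyadicI) : ℝ := (I.k : ℝ) * I.len

/-- The underlying point set `[k/2^n, (k+1)/2^n)` of a dyadic interval. -/
def toSet (I : DyadicI) : Set ℝ := Set.Ico I.lep (I.lep + I.len)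

/-- The `L^∞`-normalized Haar function `h_I`: `1` on the left half of `I`,
`-1` on the right half of `I`, `0` off `I`. -/
def haar (I : DyadicI) (t : ℝ) : ℝ :=
  if t ∈ Set.Ico I.lep (I.lep + I.len / 2) then 1
  else if t ∈ Set.Ico (I.lep + I.len / 2) (I.lep + I.len) then -1
  else 0

end DyadicI

open DyadicI

section Defs

variable {X : Type*} [NormedAddCommGroup X] [NormedSpace ℝ X]

/-- The square function `𝕊(f)` of the `X`-valued Haar expansion `f = ∑_{I ∈ s} x_I h_I`:
`𝕊(f)(t) = (E_ε ‖∑_I ε_I x_I h_I(t)‖²)^{1/2}`, the average being taken over all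
choices of signs `ε_I ∈ {±1}`, `I ∈ s`. -/
def sqFn (s : Finset DyadicI) (x : DyadicI → X) (t : ℝ) : ℝ :=
  Real.sqrt ((∑ ε : {I // I ∈ s} → Bool,
    ‖∑ I ∈ s.attach, ((if ε I then (1 : ℝ) else -1) * haar I.1 t) • x I.1‖ ^ 2) /
      2 ^ s.card)

/-- The `H^p_X` (quasi-)norm of `f = ∑_{I ∈ s} x_I h_I`:
`‖f‖ = (∫₀¹ 𝕊(f)(t)^p dt)^{1/p}`. -/
def HpNormV (p : ℝ) (s : Finset DyadicI) (x : DyadicI → X) : ℝ :=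
  (∫ t in Set.Icc (0 : ℝ) 1, sqFn s x t ^ p) ^ (1 / p)

/-- The coefficients of `(T_{τ,p} ⊗ Id_X)(f)` for `f = ∑_{I ∈ s} x_I h_I`, namely
`(T_{τ,p} ⊗ Id_X)(f) = ∑_{I ∈ s} (|I|/|τ(I)|)^{1/p} x_I h_{τ(I)}`, as a family of
coefficients indexed by the Haar support `τ(s)`. -/
def rearrCoef (τ : DyadicI → DyadicI) (p : ℝ) (s : Finset DyadicI) (x : DyadicI → X) :
    DyadicI → X :=
  fun J => ∑ I ∈ s, if τ I = J then ((len I / len (τ I)) ^ (1 / p)) • x I else 0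

/-- The scalar dyadic square function `S(f) = (∑_I a_I² 1_I)^{1/2}`
of `f = ∑_{I ∈ s} a_I h_I`. -/
def sqFnS (s : Finset DyadicI) (a : DyadicI → ℝ) (t : ℝ) : ℝ :=
  Real.sqrt (∑ I ∈ s, a I ^ 2 * Set.indicator (toSet I) (fun _ => (1 : ℝ)) t)

/-- The scalar dyadic `H^p` (quasi-)norm `‖f‖_{H^p} = ‖S(f)‖_{L^p[0,1]}`. -/
def HpNormS (p : ℝ) (s : Finset DyadicI) (a : DyadicI → ℝ) : ℝ :=
  (∫ t in Set.Icc (0 : ℝ) 1, sqFnS s a t ^ p) ^ (1 / p)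

/-- The coefficients of the scalar rearrangement operator `T_{τ,p}` applied to
`f = ∑_{I ∈ s} a_I h_I`; `T_{τ,p}` is determined by
`T_{τ,p}(h_I/|I|^{1/p}) = h_{τ(I)}/|τ(I)|^{1/p}`. -/
def rearrCoefS (τ : DyadicI → DyadicI) (p : ℝ) (s : Finset DyadicI) (a : DyadicI → ℝ) :
    DyadicI → ℝ :=
  fun J => ∑ I ∈ s, if τ I = J then ((len I / len (τ I)) ^ (1 / p)) * a I else 0

/-- The operator norm `‖T_{τ,p} ⊗ Id_X : H^p_X → H^p_X‖ ∈ [0,∞]`, computed as the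
supremum over finitely supported `f` in the unit ball of `H^p_X`. -/
def hpOpNorm (τ : DyadicI → DyadicI) (p : ℝ) (X : Type*) [NormedAddCommGroup X]
    [NormedSpace ℝ X] : ℝ≥0∞ :=
  ⨆ (s : Finset DyadicI) (x : DyadicI → X) (_ : HpNormV p s x ≤ 1),
    ENNReal.ofReal (HpNormV p (s.image τ) (rearrCoef τ p s x))

/-- The scalar operator norm `‖T_{τ,p} : H^p → H^p‖ ∈ [0,∞]`. -/
def hpOpNormS (τ : DyadicI → DyadicI) (p : ℝ) : ℝ≥0∞ :=
  ⨆ (s : Finset DyadicI) (a : DyadicI → ℝ) (_ : HpNormS p s a ≤ 1),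
    ENNReal.ofReal (HpNormS p (s.image τ) (rearrCoefS τ p s a))

/-- For `H = τ(L)` (so that `σ(J) = I` for `J = τ(I)`, `I ∈ L`), the maximal function
`μ_H(t) = sup_{J ∈ H} (|σ(J)|/|J|) 1_J(t) = sup_{I ∈ L} (|I|/|τ(I)|) 1_{τ(I)}(t)`,
as an `[0,∞]`-valued function. -/
def muSet (τ : DyadicI → DyadicI) (L : Set DyadicI) (t : ℝ) : ℝ≥0∞ :=
  ⨆ (I : DyadicI) (_ : I ∈ L),
    ENNReal.ofReal (len I / len (τ I) * Set.indicator (toSet (τ I)) (fun _ => (1 : ℝ)) t)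

/-- For `H = τ(L)` with `L` finite, the (real-valued) maximal function
`μ_H(t) = max_{I ∈ L} (|I|/|τ(I)|) 1_{τ(I)}(t)`. -/
def muFin (τ : DyadicI → DyadicI) (L : Finset DyadicI) (t : ℝ) : ℝ :=
  ((L.sup fun I =>
    Real.toNNReal (len I / len (τ I) * Set.indicator (toSet (τ I)) (fun _ => (1 : ℝ)) t) : ℝ≥0) : ℝ)

/-- The point set `L* = ⋃_{I ∈ L} I` covered by a collection of dyadic intervals. -/
def pointSet (L : Set DyadicI) : Set ℝ := ⋃ I ∈ L, toSet I

/-- The constant `C₁ = sup_{H ⊆ τ(D), H ≠ ∅} (1/|σ(H)*|) ∫₀¹ μ_H(t) dt`, where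
nonempty collections `H ⊆ τ(D)` are parametrized as `H = τ(L)` for nonempty `L ⊆ D`,
so that `σ(H)* = L*`. -/
def Cone (τ : DyadicI → DyadicI) : ℝ≥0∞ :=
  ⨆ (L : Set DyadicI) (_ : L.Nonempty),
    (∫⁻ t in Set.Icc (0 : ℝ) 1, muSet τ L t) / volume (pointSet L)

/-- The square of the dyadic BMO norm of `g = ∑_{J ∈ s} a_J h_J`:
`‖g‖_{BMO}² = sup_{I ∈ D} (1/|I|) ∑_{J ⊆ I} a_J² |J|`. -/
def bmoSq (s : Finset DyadicI) (a : DyadicI → ℝ) : ℝ≥0∞ :=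
  ⨆ I : DyadicI, ENNReal.ofReal
    ((∑ J ∈ s.filter fun J => toSet J ⊆ toSet I, a J ^ 2 * len J) / len I)

/-- The coefficients of `S_σ(g)` for `g = ∑_{J ∈ s} a_J h_J`, where `σ = τ⁻¹` on `τ(D)`:
`S_σ(h_J) = h_{σ(J)}` for `J ∈ τ(D)` and `S_σ(h_J) = 0` otherwise, so that the
coefficient of `h_K` in `S_σ(g)` is `a_{τ(K)}` if `τ(K) ∈ s`, and `0` otherwise. -/
def sSigmaCoef (τ : DyadicI → DyadicI) (s : Finset DyadicI) (a : DyadicI → ℝ) :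
    DyadicI → ℝ :=
  fun K => if τ K ∈ s then a (τ K) else 0

/-- The Haar support of `S_σ(g)` for `g` with Haar support `s`:
`σ(s ∩ τ(D))`, i.e. the preimage under `τ` of `s`. -/
def sSigmaSupp (τ : DyadicI → DyadicI) (s : Finset DyadicI) : Finset DyadicI :=
  (s.filter fun J => J ∈ Set.range τ).image (Function.invFun τ)

/-- The operator norm `‖S_σ‖_{BMO} ∈ [0,∞]` of `S_σ` with respect to the dyadic BMO
norm, computed over finitely supported Haar expansions. -/
def bmoOpNorm (τ : DyadicI → DyadicI) : ℝ≥0∞ :=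
  ⨆ (s : Finset DyadicI) (a : DyadicI → ℝ) (_ : bmoSq s a ≤ 1),
    (bmoSq (sSigmaSupp τ s) (sSigmaCoef τ s a)) ^ (1 / 2 : ℝ)

/-- The Carleson constant `⟦C⟧ = sup_{I ∈ C} (1/|I|) ∑_{J ∈ C, J ⊆ I} |J| ∈ [0,∞]`
of a collection of dyadic intervals. -/
def carleson (C : Set DyadicI) : ℝ≥0∞ :=
  ⨆ (I : DyadicI) (_ : I ∈ C),
    (∑' J : {J : DyadicI // J ∈ C ∧ toSet J ⊆ toSet I}, ENNReal.ofReal (len J.1)) /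
      ENNReal.ofReal (len I)

/-- The `L^p_X = L^p([0,1]; X)` (Bochner) norm of `f = ∑_{I ∈ s} x_I h_I`. -/
def LpNormV (p : ℝ) (s : Finset DyadicI) (x : DyadicI → X) : ℝ :=
  (∫ t in Set.Icc (0 : ℝ) 1, ‖∑ I ∈ s, haar I t • x I‖ ^ p) ^ (1 / p)

/-- The operator norm `‖T_{τ,p} ⊗ Id_X : L^p_X → L^p_X‖ ∈ [0,∞]`, computed over
finitely supported Haar expansions. -/
def lpOpNorm (τ : DyadicI → DyadicI) (p : ℝ) (X : Type*) [NormedAddCommGroup X]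
    [NormedSpace ℝ X] : ℝ≥0∞ :=
  ⨆ (s : Finset DyadicI) (x : DyadicI → X) (_ : LpNormV p s x ≤ 1),
    ENNReal.ofReal (LpNormV p (s.image τ) (rearrCoef τ p s x))

/-- The operator norm `‖T_{τ,p}^{-1} ⊗ Id_X‖ ∈ [0,∞]` on the span of
`{h_J : J ∈ τ(D)}` with the `L^p_X` norm: the map determined by
`x h_{τ(I)}/|τ(I)|^{1/p} ↦ x h_I/|I|^{1/p}`, i.e. sending
`g = ∑_{I ∈ L} x_I h_{τ(I)}` to `∑_{I ∈ L} (|τ(I)|/|I|)^{1/p} x_I h_I`. -/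
def lpInvOpNorm (τ : DyadicI → DyadicI) (p : ℝ) (X : Type*) [NormedAddCommGroup X]
    [NormedSpace ℝ X] : ℝ≥0∞ :=
  ⨆ (L : Finset DyadicI) (x : DyadicI → X)
    (_ : LpNormV p (L.image τ) (fun J => ∑ I ∈ L, if τ I = J then x I else 0) ≤ 1),
    ENNReal.ofReal (LpNormV p L fun I => ((len (τ I) / len I) ^ (1 / p)) • x I)

/-- The operator norm `‖T_{τ,1}^{-1}‖₁ ∈ [0,∞]` on the span of `{h_J : J ∈ τ(D)}`
with the dyadic `H¹` norm: the map determined by `h_{τ(I)}/|τ(I)| ↦ h_I/|I|`,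
i.e. sending `g = ∑_{I ∈ L} a_I h_{τ(I)}` to `∑_{I ∈ L} (|τ(I)|/|I|) a_I h_I`. -/
def h1InvOpNorm (τ : DyadicI → DyadicI) : ℝ≥0∞ :=
  ⨆ (L : Finset DyadicI) (a : DyadicI → ℝ)
    (_ : HpNormS 1 (L.image τ) (fun J => ∑ I ∈ L, if τ I = J then a I else 0) ≤ 1),
    ENNReal.ofReal (HpNormS 1 L fun I => (len (τ I) / len I) * a I)

/-- The Rademacher average `(E_ε ‖∑_{i<n} ε_i a_i‖^p)^{1/p}` over all choices of
signs `ε_i ∈ {±1}`. -/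
def radAvg (p : ℝ) {Y : Type*} [NormedAddCommGroup Y] [NormedSpace ℝ Y] (n : ℕ)
    (a : Fin n → Y) : ℝ :=
  ((∑ ε : Fin n → Bool, ‖∑ i, (if ε i then (1 : ℝ) else -1) • a i‖ ^ p) / 2 ^ n) ^ (1 / p)

/-- The type-`p` constant `Type_p(Y) ∈ [0,∞]`: the least `C` such that
`(E_ε ‖∑ ε_i a_i‖^p)^{1/p} ≤ C (∑ ‖a_i‖^p)^{1/p}` for all finite families in `Y`. -/
def typeConst (p : ℝ) (Y : Type*) [NormedAddCommGroup Y] [NormedSpace ℝ Y] : ℝ≥0∞ :=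
  sInf {C : ℝ≥0∞ | ∀ (n : ℕ) (a : Fin n → Y),
    ENNReal.ofReal (radAvg p n a) ≤ C * ENNReal.ofReal ((∑ i, ‖a i‖ ^ p) ^ (1 / p))}

/-- The UMD property of a Banach space `E`: for each `1 < r < ∞` the Haar system is
unconditional in `L^r_E`. -/
def IsUMD (E : Type*) [NormedAddCommGroup E] [NormedSpace ℝ E] : Prop :=
  ∀ r : ℝ, 1 < r → ∃ β : ℝ, ∀ (s : Finset DyadicI) (x : DyadicI → E) (ε : DyadicI → ℝ),
    (∀ I, ε I = 1 ∨ ε I = -1) →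
    LpNormV r s (fun I => ε I • x I) ≤ β * LpNormV r s x

/-- `B` is a block in `L` with top `I`: `B ⊆ L`, `I` is the unique maximal interval
of `B`, and `B` is order-convex in `L` between its elements and `I`. -/
def IsBlock (L : Set DyadicI) (B : Set DyadicI) (I : DyadicI) : Prop :=
  B ⊆ L ∧ I ∈ B ∧ (∀ J ∈ B, toSet J ⊆ toSet I) ∧
    ∀ J ∈ B, ∀ K ∈ L, toSet J ⊆ toSet K → toSet K ⊆ toSet I → K ∈ B

/-- `G₁(K | E)`: the maximal dyadic intervals of `E` strictly contained in `K`. -/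
def gen1 (K : DyadicI) (E : Set DyadicI) : Set DyadicI :=
  {J | J ∈ E ∧ toSet J ⊂ toSet K ∧
    ∀ J' ∈ E, toSet J' ⊂ toSet K → toSet J ⊆ toSet J' → J' = J}

end Defs

section Helpers

variable {X : Type*} [NormedAddCommGroup X] [NormedSpace ℝ X]

lemma contraction_aux {ι : Type*} [Fintype ι] [DecidableEq ι] (v : ι → X) (c : ι → ℝ) (M : ℝ)
    (hc : ∀ i, |c i| ≤ M) :
    ∑ ε : ι → Bool, ‖∑ i, (if ε i then (1 : ℝ) else -1) • c i • v i‖ ^ 2 ≤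
      M ^ 2 * ∑ ε : ι → Bool, ‖∑ i, (if ε i then (1 : ℝ) else -1) • v i‖ ^ 2 := by
  set F : (ι → ℝ) → ℝ := fun c =>
    ∑ ε : ι → Bool, ‖∑ i, (if ε i then (1 : ℝ) else -1) • c i • v i‖ ^ 2 with hF
  have hconv : ConvexOn ℝ Set.univ F := by
    refine ⟨convex_univ, ?_⟩
    intro a _ b _ α β hα hβ hαβ
    simp only [hF, smul_eq_mul, Finset.mul_sum, ← Finset.sum_add_distrib]
    refine Finset.sum_le_sum fun ε _ => ?_
    have h1 : ∑ i, (if ε i then (1 : ℝ) else -1) • (α • a + β • b) i • v i =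
        α • (∑ i, (if ε i then (1 : ℝ) else -1) • a i • v i) +
          β • (∑ i, (if ε i then (1 : ℝ) else -1) • b i • v i) := by
      rw [Finset.smul_sum, Finset.smul_sum, ← Finset.sum_add_distrib]
      refine Finset.sum_congr rfl fun i _ => ?_
      simp only [Pi.add_apply, Pi.smul_apply, smul_eq_mul]
      module
    rw [h1]
    set A := ∑ i, (if ε i then (1 : ℝ) else -1) • a i • v i
    set B := ∑ i, (if ε i then (1 : ℝ) else -1) • b i • v i
    have h2 : ‖α • A + β • B‖ ≤ α * ‖A‖ + β * ‖B‖ := by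
      refine (norm_add_le _ _).trans ?_
      rw [norm_smul, norm_smul, Real.norm_of_nonneg hα, Real.norm_of_nonneg hβ]
    have h3 : ‖α • A + β • B‖ ^ 2 ≤ (α * ‖A‖ + β * ‖B‖) ^ 2 := by gcongr
    refine h3.trans ?_
    have hβ' : β = 1 - α := by linarith
    subst hβ'
    nlinarith [mul_nonneg (mul_nonneg hα hβ) (sq_nonneg (‖A‖ - ‖B‖))]
  have hmem : c ∈ convexHull ℝ (Set.univ.pi fun _ : ι => ({-M, M} : Set ℝ)) := by
    rw [convexHull_pi]
    intro i _
    have h := abs_le.1 (hc i)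
    rw [convexHull_pair, segment_eq_Icc (by linarith)]
    exact h
  obtain ⟨y, hy, hle⟩ := hconv.exists_ge_of_mem_convexHull (Set.subset_univ _) hmem
  refine hle.trans (le_of_eq ?_)
  have hy' : ∀ i, y i = -M ∨ y i = M := fun i => by simpa using hy i (Set.mem_univ i)
  have hδ : ∀ i, ∃ d : Bool, y i = (if d then (1 : ℝ) else -1) * M := by
    intro i
    rcases hy' i with h | h
    · exact ⟨false, by simp [h]⟩
    · exact ⟨true, by simp [h]⟩
  choose d hd using hδ
  have hinv : Function.Involutive (fun (ε : ι → Bool) i => (ε i == d i)) := by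
    intro ε
    funext i
    cases h1 : ε i <;> cases h2 : d i <;> simp [h1, h2]
  simp only [hF]
  rw [Finset.mul_sum]
  let e : Equiv.Perm (ι → Bool) := Function.Involutive.toPerm _ hinv
  have he : ∀ (ε : ι → Bool) i, e ε i = (ε i == d i) := fun _ _ => rfl
  refine Finset.sum_equiv e (by simp) ?_
  intro ε _
  have : ∑ i, (if ε i then (1 : ℝ) else -1) • y i • v i =
      M • ∑ i, (if e ε i then (1 : ℝ) else -1) • v i := by
    rw [Finset.smul_sum]
    refine Finset.sum_congr rfl fun i _ => ?_
    rw [hd i]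
    rw [he]
    cases h1 : ε i <;> cases h2 : d i <;> simp
  rw [this, norm_smul, mul_pow, Real.norm_eq_abs, sq_abs]

lemma sqFn_nonneg (s : Finset DyadicI) (x : DyadicI → X) (t : ℝ) : 0 ≤ sqFn s x t :=
  Real.sqrt_nonneg _

lemma sqFn_le_mul (s : Finset DyadicI) (x y : DyadicI → X) (t M : ℝ) (hM : 0 ≤ M)
    (h : ∀ J ∈ s, ∃ c : ℝ, |c| ≤ M ∧ haar J t • y J = c • haar J t • x J) :
    sqFn s y t ≤ M * sqFn s x t := by
  choose! c hc hc' using h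
  have key := contraction_aux (fun I : {I // I ∈ s} => haar I.1 t • x I.1) (fun I => c I.1) M
    (fun I => hc I.1 I.2)
  unfold sqFn
  rw [← Real.sqrt_sq hM, ← Real.sqrt_mul (sq_nonneg M)]
  apply Real.sqrt_le_sqrt
  rw [← mul_div_assoc]
  gcongr
  simp only [mul_smul, ← Finset.univ_eq_attach]
  have hrw : ∀ I : {I // I ∈ s}, haar I.1 t • y I.1 = c I.1 • haar I.1 t • x I.1 :=
    fun I => hc' I.1 I.2
  simp only [hrw]
  convert key

lemma haar_abs_le (J : DyadicI) (t : ℝ) : |haar J t| ≤ 1 := by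
  unfold haar; split_ifs <;> simp

lemma len_pos (J : DyadicI) : 0 < len J := by unfold len; positivity

lemma haar_ne_zero_iff (J : DyadicI) (t : ℝ) : haar J t ≠ 0 ↔ t ∈ toSet J := by
  have := len_pos J
  unfold haar toSet
  simp only [Set.mem_Ico]
  split_ifs with h1 h2
  · simp; constructor <;> linarith
  · simp; constructor <;> linarith
  · simp
    intro h
    by_contra h3
    push Not at h3
    by_cases h4 : t < lep J + len J / 2
    · exact h1 ⟨h, h4⟩
    · exact h2 ⟨by linarith, h3⟩

lemma haar_meas (J : DyadicI) : Measurable (haar J) := by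
  unfold haar
  refine Measurable.ite measurableSet_Ico measurable_const ?_
  exact Measurable.ite measurableSet_Ico measurable_const measurable_const

lemma sqFn_meas (s : Finset DyadicI) (x : DyadicI → X) : Measurable (sqFn s x) := by
  unfold sqFn
  refine Measurable.sqrt ?_
  refine Measurable.div_const ?_ _
  refine Finset.measurable_sum _ fun ε _ => ?_
  refine Measurable.pow_const ?_ _
  refine (StronglyMeasurable.norm ?_).measurable
  refine Finset.stronglyMeasurable_fun_sum _ fun I _ => ?_
  exact (((haar_meas I.1).const_mul _).stronglyMeasurable).smul_const _

lemma sqFn_bdd (s : Finset DyadicI) (x : DyadicI → X) (t : ℝ) :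
    sqFn s x t ≤ ∑ I ∈ s.attach, ‖x I.1‖ := by
  have h0 : 0 ≤ ∑ I ∈ s.attach, ‖x I.1‖ := Finset.sum_nonneg fun _ _ => norm_nonneg _
  unfold sqFn
  rw [Real.sqrt_le_left h0, div_le_iff₀ (by positivity)]
  refine (Finset.sum_le_card_nsmul _ _ ((∑ I ∈ s.attach, ‖x I.1‖) ^ 2) ?_).trans (le_of_eq ?_)
  · intro ε _
    gcongr
    refine norm_sum_le_of_le _ fun I _ => ?_
    rw [norm_smul, norm_mul]
    have := haar_abs_le I.1 t
    have h2 : ‖(if ε I then (1 : ℝ) else -1)‖ = 1 := by split_ifs <;> simp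
    rw [h2, one_mul, Real.norm_eq_abs]
    exact mul_le_of_le_one_left (norm_nonneg _) this
  · simp [mul_comm]

lemma HpNormV_eq (p : ℝ) (hp : 0 < p) (s : Finset DyadicI) (x : DyadicI → X) :
    ENNReal.ofReal (HpNormV p s x) =
      (∫⁻ t in Set.Icc (0 : ℝ) 1, ENNReal.ofReal (sqFn s x t) ^ p) ^ (1 / p) := by
  unfold HpNormV
  have hnn : ∀ t, 0 ≤ sqFn s x t ^ p := fun t => Real.rpow_nonneg (sqFn_nonneg s x t) p
  rw [← ENNReal.ofReal_rpow_of_nonneg (integral_nonneg hnn) (by positivity),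
    ofReal_integral_eq_lintegral_ofReal _ (ae_of_all _ hnn)]
  · congr 1
    refine lintegral_congr fun t => ?_
    rw [ENNReal.ofReal_rpow_of_nonneg (sqFn_nonneg s x t) hp.le]
  · refine Measure.integrableOn_of_bounded (M := (∑ I ∈ s.attach, ‖x I.1‖) ^ p) (by simp) ?_ ?_
    · exact ((sqFn_meas s x).pow_const p).aestronglyMeasurable
    · refine ae_of_all _ fun t => ?_
      rw [Real.norm_of_nonneg (hnn t)]
      exact Real.rpow_le_rpow (sqFn_nonneg s x t) (sqFn_bdd s x t) hp.le

lemma sqFn_ne_zero (s : Finset DyadicI) (x : DyadicI → X) (J : DyadicI) (hJ : J ∈ s)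
    (hx : x J ≠ 0) (t : ℝ) (ht : t ∈ toSet J) : sqFn s x t ≠ 0 := by
  intro h
  unfold sqFn at h
  rw [Real.sqrt_eq_zero (by positivity)] at h
  have h1 := (div_eq_zero_iff.1 h).resolve_right (by positivity)
  rw [Finset.sum_eq_zero_iff_of_nonneg (fun _ _ => by positivity)] at h1
  have h2 : ∀ ε : {I // I ∈ s} → Bool,
      ∑ I ∈ s.attach, ((if ε I then (1 : ℝ) else -1) * haar I.1 t) • x I.1 = 0 := fun ε => by
    simpa using h1 ε (Finset.mem_univ _)
  have ha := h2 (fun _ => true)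
  have hb := h2 (Function.update (fun _ => true) ⟨J, hJ⟩ false)
  have hc : (∑ I ∈ s.attach, ((if (fun _ => true : {I // I ∈ s} → Bool) I then (1 : ℝ) else -1)
      * haar I.1 t) • x I.1) - ∑ I ∈ s.attach,
      ((if (Function.update (fun _ => true : {I // I ∈ s} → Bool) ⟨J, hJ⟩ false) I
        then (1 : ℝ) else -1) * haar I.1 t) • x I.1 = (2 * haar J t) • x J := by
    rw [← Finset.sum_sub_distrib, Finset.sum_eq_single ⟨J, hJ⟩]
    · simp; module
    · intro b _ hb
      simp [Function.update_of_ne hb]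
    · simp
  rw [ha, hb, sub_zero] at hc
  have h3 := (haar_ne_zero_iff J t).2 ht
  rcases smul_eq_zero.1 hc.symm with h4 | h4
  · exact h3 (by linarith)
  · exact hx h4

lemma muSet_meas (τ : DyadicI → DyadicI) (L : Set DyadicI) (hL : L.Finite) :
    Measurable (muSet τ L) := by
  unfold muSet
  refine Measurable.biSup L hL.countable fun I _ => ?_
  refine ENNReal.measurable_ofReal.comp ?_
  exact (measurable_const.indicator measurableSet_Ico).const_mul _

lemma muSet_lt_top (τ : DyadicI → DyadicI) (L : Set DyadicI) (s : Finset DyadicI)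
    (hL : L ⊆ s) (t : ℝ) : muSet τ L t ≠ ⊤ := by
  have : muSet τ L t ≤ ∑ I ∈ s, ENNReal.ofReal
      (len I / len (τ I) * Set.indicator (toSet (τ I)) (fun _ => (1 : ℝ)) t) := by
    unfold muSet
    refine iSup₂_le fun I hI => ?_
    exact Finset.single_le_sum (f := fun I => ENNReal.ofReal
      (len I / len (τ I) * Set.indicator (toSet (τ I)) (fun _ => (1 : ℝ)) t))
      (fun _ _ => zero_le) (hL hI)
  refine ne_top_of_le_ne_top ?_ this
  simp

lemma rearrCoef_apply (τ : DyadicI → DyadicI) (hτ : Function.Injective τ) (p : ℝ)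
    (s : Finset DyadicI) (x : DyadicI → X) (I : DyadicI) (hI : I ∈ s) :
    rearrCoef τ p s x (τ I) = ((len I / len (τ I)) ^ (1 / p)) • x I := by
  unfold rearrCoef
  rw [Finset.sum_eq_single I]
  · simp
  · intro b _ hb
    rw [if_neg (fun h => hb (hτ h))]
  · exact fun h => absurd hI h

lemma vol_toSet (I : DyadicI) : volume (toSet I) = ENNReal.ofReal (len I) := by
  unfold toSet; simp

lemma lint_mu_le (τ : DyadicI → DyadicI) (L : Set DyadicI) (I₀ : DyadicI)
    (hL : ∀ J ∈ L, toSet J ⊆ toSet I₀) :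
    ∫⁻ t in Set.Icc (0 : ℝ) 1, muSet τ L t ≤ Cone τ * ENNReal.ofReal (len I₀) := by
  rcases L.eq_empty_or_nonempty with rfl | hne
  · simp [muSet]
  have hsub : pointSet L ⊆ toSet I₀ := Set.iUnion₂_subset hL
  have hvol : volume (pointSet L) ≤ ENNReal.ofReal (len I₀) := by
    rw [← vol_toSet]; exact measure_mono hsub
  have h1 : (∫⁻ t in Set.Icc (0 : ℝ) 1, muSet τ L t) / volume (pointSet L) ≤ Cone τ :=
    le_iSup₂_of_le (f := fun (L : Set DyadicI) (_ : L.Nonempty) =>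
      (∫⁻ t in Set.Icc (0 : ℝ) 1, muSet τ L t) / volume (pointSet L)) L hne le_rfl
  have hpos : volume (pointSet L) ≠ 0 := by
    obtain ⟨J, hJ⟩ := hne
    have h2 : toSet J ⊆ pointSet L := Set.subset_biUnion_of_mem hJ
    have h3 := measure_mono (μ := volume) h2
    rw [vol_toSet] at h3
    exact (lt_of_lt_of_le (ENNReal.ofReal_pos.2 (len_pos J)) h3).ne'
  rw [ENNReal.div_le_iff hpos (ne_top_of_le_ne_top ENNReal.ofReal_ne_top hvol)] at h1
  exact h1.trans (by gcongr)

end Helpers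

/-- Let `0 < q ≤ p ≤ 2`, `X` a Banach space, `τ : D → D` injective,
and let `f = ∑_J x_J h_J` be a finitely supported dyadic `H^q_X` atom: there is
`I₀ ∈ D` with `supp 𝕊(f) ⊆ I₀` and `𝕊(f) ≤ |I₀|^{-1/q}` everywhere. Then
`‖(T_{τ,q} ⊗ Id_X)(f)‖_{H^q_X} ≤ C₁^{1/q - 1/p} · ‖T_{τ,p} ⊗ Id_X‖_p` in `[0,∞]`. -/
theorem statement9 (p q : ℝ) (hq : 0 < q) (hqp : q ≤ p) (hp : p ≤ 2)
    (X : Type*) [NormedAddCommGroup X] [NormedSpace ℝ X] [CompleteSpace X]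
    (τ : DyadicI → DyadicI) (hτ : Function.Injective τ)
    (s : Finset DyadicI) (x : DyadicI → X) (I₀ : DyadicI)
    (hsupp : Function.support (sqFn s x) ⊆ DyadicI.toSet I₀)
    (hatom : ∀ t : ℝ, sqFn s x t ≤ DyadicI.len I₀ ^ (-(1 / q))) :
    ENNReal.ofReal (HpNormV q (s.image τ) (rearrCoef τ q s x)) ≤
      Cone τ ^ (1 / q - 1 / p) * hpOpNorm τ p X := by
  have hp0 : 0 < p := hq.trans_le hqp
  set δ : ℝ := 1 / q - 1 / p with hδ
  have hδ0 : 0 ≤ δ := sub_nonneg.2 (one_div_le_one_div_of_le hq hqp)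
  set L : Set DyadicI := {J | J ∈ s ∧ x J ≠ 0} with hLdef
  have hLs : L ⊆ s := fun J hJ => hJ.1
  have hLfin : L.Finite := s.finite_toSet.subset hLs
  have hLI : ∀ J ∈ L, toSet J ⊆ toSet I₀ := fun J hJ t ht =>
    hsupp (sqFn_ne_zero s x J hJ.1 hJ.2 t ht)
  have hmu := lint_mu_le τ L I₀ hLI
  set l : ℝ := len I₀ with hl
  have hl0 : 0 < l := len_pos I₀
  set l' : ℝ≥0∞ := ENNReal.ofReal l with hl'
  have hl'0 : l' ≠ 0 := (ENNReal.ofReal_pos.2 hl0).ne'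
  have hl't : l' ≠ ⊤ := ENNReal.ofReal_ne_top
  -- pointwise estimate
  have hpt : ∀ t, ENNReal.ofReal (sqFn (s.image τ) (rearrCoef τ q s x) t) ≤
      muSet τ L t ^ δ * ENNReal.ofReal (sqFn (s.image τ) (rearrCoef τ p s x) t) := by
    intro t
    have hfin := muSet_lt_top τ L s hLs t
    have h := sqFn_le_mul (s.image τ) (rearrCoef τ p s x) (rearrCoef τ q s x) t
      ((muSet τ L t).toReal ^ δ) (by positivity) (by
        intro J hJ
        obtain ⟨I, hI, rfl⟩ := Finset.mem_image.1 hJ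
        rw [rearrCoef_apply τ hτ p s x I hI, rearrCoef_apply τ hτ q s x I hI]
        by_cases hz : x I = 0
        · exact ⟨0, by simp; positivity, by simp [hz]⟩
        by_cases hh : haar (τ I) t = 0
        · exact ⟨0, by simp; positivity, by simp [hh]⟩
        have hr : 0 < len I / len (τ I) := div_pos (len_pos _) (len_pos _)
        refine ⟨(len I / len (τ I)) ^ δ, ?_, ?_⟩
        · rw [abs_of_nonneg (by positivity)]
          refine Real.rpow_le_rpow hr.le ?_ hδ0
          rw [← ENNReal.ofReal_le_iff_le_toReal hfin]
          have hmem := (haar_ne_zero_iff (τ I) t).1 hh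
          refine le_iSup₂_of_le (f := fun I (_ : I ∈ L) => ENNReal.ofReal
            (len I / len (τ I) * Set.indicator (toSet (τ I)) (fun _ => (1 : ℝ)) t))
            I ⟨hI, hz⟩ ?_
          simp [Set.indicator_of_mem hmem]
        · have : (len I / len (τ I)) ^ (1 / q) =
              (len I / len (τ I)) ^ δ * (len I / len (τ I)) ^ (1 / p) := by
            rw [← Real.rpow_add hr]; congr 1; rw [hδ]; ring
          rw [this]; module)
    refine (ENNReal.ofReal_le_ofReal h).trans (le_of_eq ?_)
    rw [ENNReal.ofReal_mul (by positivity),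
      ← ENNReal.ofReal_rpow_of_nonneg ENNReal.toReal_nonneg hδ0, ENNReal.ofReal_toReal hfin]
  -- Hölder
  have hold : ENNReal.ofReal (HpNormV q (s.image τ) (rearrCoef τ q s x)) ≤
      (∫⁻ t in Set.Icc (0 : ℝ) 1, muSet τ L t) ^ δ *
        ENNReal.ofReal (HpNormV p (s.image τ) (rearrCoef τ p s x)) := by
    rw [HpNormV_eq q hq, HpNormV_eq p hp0]
    have hqp1 : q / p ≤ 1 := (div_le_one hp0).2 hqp
    have hH := ENNReal.lintegral_mul_norm_pow_le (μ := volume.restrict (Set.Icc (0 : ℝ) 1))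
      (f := muSet τ L)
      (g := fun t => ENNReal.ofReal (sqFn (s.image τ) (rearrCoef τ p s x) t) ^ p)
      (muSet_meas τ L hLfin).aemeasurable
      (((sqFn_meas (s.image τ) (rearrCoef τ p s x)).ennreal_ofReal).pow_const p).aemeasurable
      (p := 1 - q / p) (q := q / p) (by linarith) (by positivity) (by ring)
    have h1 : ∫⁻ t in Set.Icc (0 : ℝ) 1,
        ENNReal.ofReal (sqFn (s.image τ) (rearrCoef τ q s x) t) ^ q ≤
        ∫⁻ t in Set.Icc (0 : ℝ) 1, muSet τ L t ^ (1 - q / p) *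
          (ENNReal.ofReal (sqFn (s.image τ) (rearrCoef τ p s x) t) ^ p) ^ (q / p) := by
      refine lintegral_mono fun t => ?_
      refine (ENNReal.rpow_le_rpow (hpt t) hq.le).trans (le_of_eq ?_)
      rw [ENNReal.mul_rpow_of_nonneg _ _ hq.le, ← ENNReal.rpow_mul, ← ENNReal.rpow_mul]
      congr 2
      · rw [hδ]; field_simp
      · field_simp
    refine (ENNReal.rpow_le_rpow (h1.trans hH) (by positivity)).trans (le_of_eq ?_)
    rw [ENNReal.mul_rpow_of_nonneg _ _ (by positivity), ← ENNReal.rpow_mul, ← ENNReal.rpow_mul]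
    congr 2
    · rw [hδ]; field_simp
    · field_simp
  -- scaled atom
  have hscale : ∀ (u : Finset DyadicI) (y : DyadicI → X) (t : ℝ),
      sqFn u (fun J => l ^ δ • y J) t ≤ l ^ δ * sqFn u y t := by
    intro u y t
    refine sqFn_le_mul u y _ t _ (by positivity) fun J _ => ⟨l ^ δ, ?_, by module⟩
    rw [abs_of_nonneg (by positivity)]
  have hunit : HpNormV p s (fun J => l ^ δ • x J) ≤ 1 := by
    rw [← ENNReal.ofReal_le_ofReal_iff zero_le_one, HpNormV_eq p hp0, ENNReal.ofReal_one]
    have h1 : ∫⁻ t in Set.Icc (0 : ℝ) 1, ENNReal.ofReal (sqFn s (fun J => l ^ δ • x J) t) ^ p ≤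
        ∫⁻ t in Set.Icc (0 : ℝ) 1, (toSet I₀).indicator (fun _ => l' ^ (-1 : ℝ)) t := by
      refine lintegral_mono fun t => ?_
      by_cases ht : t ∈ toSet I₀
      · rw [Set.indicator_of_mem ht]
        have h2 : sqFn s (fun J => l ^ δ • x J) t ≤ l ^ (-(1 / p)) := by
          refine (hscale s x t).trans ?_
          refine (mul_le_mul_of_nonneg_left (hatom t) (by positivity)).trans (le_of_eq ?_)
          rw [← Real.rpow_add hl0]; congr 1; rw [hδ]; ring
        refine (ENNReal.rpow_le_rpow (ENNReal.ofReal_le_ofReal h2) hp0.le).trans (le_of_eq ?_)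
        rw [← ENNReal.ofReal_rpow_of_pos hl0, ← ENNReal.rpow_mul]
        congr 1; field_simp
      · have h0 : sqFn s x t = 0 := by
          by_contra h; exact ht (hsupp h)
        have h2 := hscale s x t
        rw [h0, mul_zero] at h2
        rw [ENNReal.ofReal_of_nonpos h2, ENNReal.zero_rpow_of_pos hp0]
        exact zero_le
    have h3 : ∫⁻ t in Set.Icc (0 : ℝ) 1, (toSet I₀).indicator (fun _ => l' ^ (-1 : ℝ)) t ≤ 1 := by
      refine (setLIntegral_le_lintegral _ _).trans ?_
      rw [lintegral_indicator_const (show MeasurableSet (toSet I₀) from measurableSet_Ico), vol_toSet, ENNReal.rpow_neg_one]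
      exact (ENNReal.inv_mul_cancel hl'0 hl't).le
    exact ENNReal.rpow_le_one (h1.trans h3) (by positivity)
  have hop : ENNReal.ofReal (HpNormV p (s.image τ) (rearrCoef τ p s fun J => l ^ δ • x J)) ≤
      hpOpNorm τ p X :=
    le_iSup_of_le s (le_iSup_of_le (fun J => l ^ δ • x J) (le_iSup_of_le hunit le_rfl))
  have hback : l' ^ δ * ENNReal.ofReal (HpNormV p (s.image τ) (rearrCoef τ p s x)) ≤
      ENNReal.ofReal (HpNormV p (s.image τ) (rearrCoef τ p s fun J => l ^ δ • x J)) := by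
    rw [HpNormV_eq p hp0, HpNormV_eq p hp0]
    have h1 : l' ^ δ = ((l' ^ δ) ^ p) ^ (1 / p) := by
      rw [← ENNReal.rpow_mul, mul_one_div_cancel hp0.ne', ENNReal.rpow_one]
    rw [h1, ← ENNReal.mul_rpow_of_nonneg _ _ (by positivity)]
    refine ENNReal.rpow_le_rpow ?_ (by positivity)
    rw [← lintegral_const_mul' _ _ (by
      exact ENNReal.rpow_ne_top_of_nonneg hp0.le (ENNReal.rpow_ne_top_of_nonneg hδ0 hl't))]
    refine lintegral_mono fun t => ?_
    rw [← ENNReal.mul_rpow_of_nonneg _ _ hp0.le]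
    refine ENNReal.rpow_le_rpow ?_ hp0.le
    rw [hl', ENNReal.ofReal_rpow_of_pos hl0, ← ENNReal.ofReal_mul (by positivity)]
    refine ENNReal.ofReal_le_ofReal ?_
    have h2 := sqFn_le_mul (s.image τ) (rearrCoef τ p s fun J => l ^ δ • x J)
      (rearrCoef τ p s x) t ((l ^ δ)⁻¹) (by positivity) (by
        intro J hJ
        obtain ⟨I, hI, rfl⟩ := Finset.mem_image.1 hJ
        rw [rearrCoef_apply τ hτ p s _ I hI, rearrCoef_apply τ hτ p s _ I hI]
        refine ⟨(l ^ δ)⁻¹, by rw [abs_of_nonneg (by positivity)], ?_⟩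
        have hne : l ^ δ ≠ 0 := by positivity
        simp only [smul_smul]
        congr 1
        field_simp)
    calc _ ≤ l ^ δ * ((l ^ δ)⁻¹ *
          sqFn (s.image τ) (rearrCoef τ p s fun J => l ^ δ • x J) t) := by gcongr
      _ = _ := by
        have hne : l ^ δ ≠ 0 := by positivity
        field_simp
  calc _ ≤ _ := hold
    _ ≤ (Cone τ * l') ^ δ * ENNReal.ofReal (HpNormV p (s.image τ) (rearrCoef τ p s x)) := by
        gcongr
    _ = Cone τ ^ δ *
        (l' ^ δ * ENNReal.ofReal (HpNormV p (s.image τ) (rearrCoef τ p s x))) := by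
        rw [ENNReal.mul_rpow_of_nonneg _ _ hδ0, mul_assoc]
    _ ≤ _ := by gcongr; exact hback.trans hop
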